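/- Two K-programs P and Q are structurally congruent (i.e., their PGA-translations, obtained by replacing a trailing repeater ↰n by infinite repetition of the last n preceding instructions, are provably equal from the PGA axioms PGA1–PGA8) if and only if the equation P = Q is derivable in the proof system L_sc. -/

import Mathlib

/-- Primitive instructions over a set `A` of basic instructions:
basic instructions `a`, positive tests `+a`, negative tests `-a`,
jump instructions `#k` and the termination instruction `!`. -/
inductive PrimInstr (A : Type) : Type where
  | basic (a : A)
  | pos (a : A)
  | neg (a : A)
  | jump (k : Nat)
  | halt
deriving DecidableEq

/-- PGA-programs over `A`: primitive instructions, concatenation `X;Y`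
and repetition `X^ω`. -/
inductive PGA (A : Type) : Type where
  | prim (u : PrimInstr A)
  | seq (X Y : PGA A)
  | rep (X : PGA A)
deriving DecidableEq

/-- `X.pow n` is the power `X^n` for `n ≥ 1`: `X^1 = X` and `X^(n+1) = X ; X^n`.
(The value at `0` is irrelevant and set to `X`; all statements only use `n ≥ 1`.) -/
def PGA.pow {A : Type} (X : PGA A) : Nat → PGA A
  | 0 => X
  | 1 => X
  | n+2 => X.seq (X.pow (n+1))

/-- `catP [u_1, …, u_n] X` is the program `u_1 ; … ; u_n ; X`. -/
def catP {A : Type} : List (PrimInstr A) → PGA A → PGA A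
  | [], X => X
  | u :: l, X => (PGA.prim u).seq (catP l X)

/-- `fromL u [v_1, …, v_n]` is the repetition-free program `u ; v_1 ; … ; v_n`. -/
def fromL {A : Type} : PrimInstr A → List (PrimInstr A) → PGA A
  | u, [] => .prim u
  | u, v :: l => (PGA.prim u).seq (fromL v l)

/-- `progYZw [u_1,…,u_n] v [w_1,…,w_m]` is the first canonical form
`u_1 ; … ; u_n ; (v ; w_1 ; … ; w_m)^ω` (just `(v ; w_1 ; … ; w_m)^ω` if `n = 0`). -/
def progYZw {A : Type} (l₁ : List (PrimInstr A)) (v : PrimInstr A)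
    (l₂ : List (PrimInstr A)) : PGA A :=
  catP l₁ (PGA.rep (fromL v l₂))

/-- Equational-logic derivability from the axioms PGA1-PGA8 of program algebra
(structural congruence).  In PGA5-PGA8, `u_i`, `v_j` range over primitive
instructions and `k`, `n`, `m` over natural numbers. -/
inductive DerivSC {A : Type} : PGA A → PGA A → Prop
  | refl (X : PGA A) : DerivSC X X
  | symm {X Y : PGA A} : DerivSC X Y → DerivSC Y X
  | trans {X Y Z : PGA A} : DerivSC X Y → DerivSC Y Z → DerivSC X Z
  | seq_congr {X X' Y Y' : PGA A} : DerivSC X X' → DerivSC Y Y' → DerivSC (X.seq Y) (X'.seq Y')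
  | rep_congr {X Y : PGA A} : DerivSC X Y → DerivSC X.rep Y.rep
  | pga1 (X Y Z : PGA A) : DerivSC ((X.seq Y).seq Z) (X.seq (Y.seq Z))
  | pga2 (X : PGA A) (n : ℕ) (hn : 1 ≤ n) : DerivSC ((X.pow n).rep) X.rep
  | pga3 (X Y : PGA A) : DerivSC (X.rep.seq Y) X.rep
  | pga4 (X Y : PGA A) : DerivSC ((X.seq Y).rep) (X.seq ((Y.seq X).rep))
  | pga5 (l : List (PrimInstr A)) :
      DerivSC (catP (.jump (l.length + 1) :: l) (.prim (.jump 0)))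
              (catP (.jump 0 :: l) (.prim (.jump 0)))
  | pga6 (l : List (PrimInstr A)) (m : ℕ) :
      DerivSC (catP (.jump (l.length + 1) :: l) (.prim (.jump m)))
              (catP (.jump (l.length + m + 1) :: l) (.prim (.jump m)))
  | pga7 (k : ℕ) (l : List (PrimInstr A)) :
      DerivSC (PGA.rep (fromL (.jump (k + l.length + 1)) l))
              (PGA.rep (fromL (.jump k) l))
  | pga8 (l₁ : List (PrimInstr A)) (v : PrimInstr A) (l₂ : List (PrimInstr A)) (k : ℕ) :
      DerivSC ((PGA.prim (.jump (l₁.length + l₂.length + k + 2))).seq (progYZw l₁ v l₂))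
              ((PGA.prim (.jump (l₁.length + k + 1))).seq (progYZw l₁ v l₂))

/-- Instructions of the semigroup `L`: primitive instructions and
repeat instructions (repeaters) `↰n`.  (Genuine repeaters have `n ≥ 1`;
this is imposed as a hypothesis wherever relevant.) -/
inductive Instr (A : Type) : Type where
  | prim (u : PrimInstr A)
  | rep (n : Nat)
deriving DecidableEq

/-- Is this instruction a repeater? -/
def Instr.isRep {A : Type} : Instr A → Bool
  | .rep _ => true
  | .prim _ => false

/-- `↰n` is a genuine repeat instruction only for `n ≥ 1`. -/
def Instr.valid {A : Type} : Instr A → Prop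
  | .prim _ => True
  | .rep n => 1 ≤ n

/-- Terms of the semigroup `L`: finite nonempty sequences of instructions
under (associative) concatenation. -/
inductive LTerm (A : Type) : Type where
  | instr (i : Instr A)
  | seq (s t : LTerm A)
deriving DecidableEq

/-- The (nonempty) sequence of instructions an `L`-term consists of. -/
def LTerm.flat {A : Type} : LTerm A → List (Instr A)
  | .instr i => [i]
  | .seq s t => s.flat ++ t.flat

/-- `cat [i_1, …, i_n] t` is the `L`-term `i_1 ; … ; i_n ; t`. -/
def cat {A : Type} : List (Instr A) → LTerm A → LTerm A
  | [], t => t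
  | i :: l, t => (LTerm.instr i).seq (cat l t)

/-- `pcat [u_1, …, u_n] t` is the `L`-term `u_1 ; … ; u_n ; t`
for primitive instructions `u_i`. -/
def pcat {A : Type} (l : List (PrimInstr A)) (t : LTerm A) : LTerm A :=
  cat (l.map Instr.prim) t

/-- `listPow l m` is the `m`-fold concatenation `l^m` of the list `l`. -/
def listPow {α : Type} (l : List α) : ℕ → List α
  | 0 => []
  | n+1 => l ++ listPow l n

/-- The primitive instructions occurring in an instruction sequence. -/
def primsOf {A : Type} (l : List (Instr A)) : List (PrimInstr A) :=
  l.filterMap fun i => match i with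
    | .prim u => some u
    | .rep _ => none

/-- The counter of the final repeat instruction of an instruction sequence, if any. -/
def repOf {A : Type} (l : List (Instr A)) : Option ℕ :=
  match l.getLast? with
  | some (.rep n) => some n
  | _ => none

/-- Position lookup for the SPI denoted by `u_1 ; … ; u_k ; ↰n` (`us` the list of
the `u_i`): positions beyond the end wrap around through the last `n` instructions. -/
def kAt {A : Type} (us : List (PrimInstr A)) (n : ℕ) (p : ℕ) : Option (PrimInstr A) :=
  if p < us.length then us[p]?
  else us[us.length - n + (p - (us.length - n)) % n]?

/-- The SPI denoted by a `K`-program, given as position lookup on its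
instruction sequence: a repeater-free `K`-program `u_1 ; … ; u_n` denotes
`u_1 ; … ; u_n` and `u_1 ; … ; u_k ; ↰n` (`n ≤ k`) denotes `u_1 ; … ; u_{k-n}`
followed by the infinite repetition of `u_{k-n+1} ; … ; u_k`. -/
def kDen {A : Type} (l : List (Instr A)) : ℕ → Option (PrimInstr A) :=
  match repOf l with
  | none => fun p => (primsOf l)[p]?
  | some n => kAt (primsOf l) n

/-- `K`-programs: first canonical `L`-forms `u_1 ; … ; u_k` (all `u_i`
primitive), or `u_1 ; … ; u_k ; ↰n` with `1 ≤ n ≤ k`. -/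
def IsKProg {A : Type} (t : LTerm A) : Prop :=
  (∃ (u : PrimInstr A) (us : List (PrimInstr A)), t.flat = (u :: us).map Instr.prim) ∨
  (∃ (u : PrimInstr A) (us : List (PrimInstr A)) (n : ℕ),
     t.flat = (u :: us).map Instr.prim ++ [Instr.rep n] ∧ 1 ≤ n ∧ n ≤ (u :: us).length)

/-- The proof system `L_sc`: equational-logic derivability from the axioms (1)-(8) for structural congruence on `L`, where `u_i`, `v_j` range over primitive instructions, `k, l ∈ ℕ` and `m, n ≥ 1`. -/
inductive DerivLsc {{A : Type}} : LTerm A → LTerm A → Prop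
  | refl (t : LTerm A) : DerivLsc t t
  | symm {{s t : LTerm A}} : DerivLsc s t → DerivLsc t s
  | trans {{s t u : LTerm A}} : DerivLsc s t → DerivLsc t u → DerivLsc s u
  | seq_congr {{s s' t t' : LTerm A}} : DerivLsc s s' → DerivLsc t t' → DerivLsc (s.seq t) (s'.seq t')
  | assoc (s t u : LTerm A) : DerivLsc ((s.seq t).seq u) (s.seq (t.seq u))
  | ax2 (u : PrimInstr A) (us : List (PrimInstr A)) (m : ℕ) (hm : 1 ≤ m) :
      DerivLsc (pcat (u :: us) (.instr (.rep (u :: us).length)))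
          (pcat (listPow (u :: us) m) (.instr (.rep (m * (u :: us).length))))
  | ax3 (n : ℕ) (hn : 1 ≤ n) (t : LTerm A) :
      DerivLsc ((LTerm.instr (.rep n)).seq t) (.instr (.rep n))
  | ax4 (u : PrimInstr A) (us : List (PrimInstr A)) (v : PrimInstr A) (vs : List (PrimInstr A)) :
      DerivLsc
        (pcat ((u :: us) ++ (v :: vs)) (.instr (.rep ((u :: us).length + (v :: vs).length))))
        (pcat ((u :: us) ++ (v :: vs) ++ (u :: us)) (.instr (.rep ((u :: us).length + (v :: vs).length))))
  | ax5 (us : List (PrimInstr A)) :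
      DerivLsc (pcat (.jump (us.length + 1) :: us) (.instr (.prim (.jump 0))))
          (pcat (.jump 0 :: us) (.instr (.prim (.jump 0))))
  | ax6 (us : List (PrimInstr A)) (m : ℕ) (hm : 1 ≤ m) :
      DerivLsc (pcat (.jump (us.length + 1) :: us) (.instr (.prim (.jump m))))
          (pcat (.jump (us.length + m + 1) :: us) (.instr (.prim (.jump m))))
  | ax7 (us : List (PrimInstr A)) (l : ℕ) :
      DerivLsc (pcat (.jump (us.length + 1 + l) :: us) (.instr (.rep (us.length + 1))))
          (pcat (.jump l :: us) (.instr (.rep (us.length + 1))))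
  | ax8 (us : List (PrimInstr A)) (v : PrimInstr A) (vs : List (PrimInstr A)) (l : ℕ) :
      DerivLsc
        (pcat (.jump (us.length + 1 + (vs.length + 1) + l) :: (us ++ v :: vs))
          (.instr (.rep (vs.length + 1))))
        (pcat (.jump (us.length + 1 + l) :: (us ++ v :: vs))
          (.instr (.rep (vs.length + 1))))

/-- The repetition-free PGA-program `u_1 ; … ; u_n` (junk for the empty list,
which never occurs under the hypotheses used). -/
def pgaOfPrims {A : Type} : List (PrimInstr A) → PGA A
  | [] => .prim .halt
  | [u] => .prim u
  | u :: v :: l => (PGA.prim u).seq (pgaOfPrims (v :: l))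

/-- The PGA-translation of a `K`-program (given by its instruction sequence):
a trailing repeater `↰n` is replaced by infinite repetition of the last `n`
preceding instructions. -/
def pgaOfK {A : Type} (l : List (Instr A)) : PGA A :=
  match repOf l with
  | none => pgaOfPrims (primsOf l)
  | some n =>
      if (primsOf l).length ≤ n then PGA.rep (pgaOfPrims (primsOf l))
      else (pgaOfPrims ((primsOf l).take ((primsOf l).length - n))).seq
             (PGA.rep (pgaOfPrims ((primsOf l).drop ((primsOf l).length - n))))

section Forward
variable {A : Type}

/-- right-associated term of a list -/
def toT : List (Instr A) → LTerm A
  | [] => .instr (.rep 0)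
  | [i] => .instr i
  | i :: j :: l => (LTerm.instr i).seq (toT (j :: l))

theorem flat_ne (s : LTerm A) : s.flat ≠ [] := by
  induction s with
  | instr i => simp [LTerm.flat]
  | seq s t ih _ => simp [LTerm.flat, ih]

theorem toT_cons (i : Instr A) (l : List (Instr A)) (h : l ≠ []) :
    toT (i :: l) = (LTerm.instr i).seq (toT l) := by
  cases l with
  | nil => exact absurd rfl h
  | cons j l => rfl

theorem toT_app (a b : List (Instr A)) (ha : a ≠ []) (hb : b ≠ []) :
    DerivLsc ((toT a).seq (toT b)) (toT (a ++ b)) := by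
  induction a with
  | nil => exact absurd rfl ha
  | cons i l ih =>
    by_cases hl : l = []
    · subst hl
      rw [List.singleton_append, toT_cons i b hb]
      exact .refl _
    · rw [toT_cons i l hl, List.cons_append, toT_cons i (l ++ b) (by simp [hl])]
      exact (DerivLsc.assoc _ _ _).trans (.seq_congr (.refl _) (ih hl))

theorem deriv_toT (s : LTerm A) : DerivLsc s (toT s.flat) := by
  induction s with
  | instr i => exact .refl _
  | seq s t ihs iht =>
    exact (DerivLsc.seq_congr ihs iht).trans (toT_app _ _ (flat_ne _) (flat_ne _))

theorem flat_eq {s t : LTerm A} (h : s.flat = t.flat) : DerivLsc s t := by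
  have := deriv_toT s
  rw [h] at this
  exact this.trans (deriv_toT t).symm

theorem flat_cat (l : List (Instr A)) (t : LTerm A) : (cat l t).flat = l ++ t.flat := by
  induction l with
  | nil => rfl
  | cons i l ih => simp [cat, LTerm.flat, ih]

theorem flat_pcat (l : List (PrimInstr A)) (t : LTerm A) :
    (pcat l t).flat = l.map Instr.prim ++ t.flat := flat_cat _ _

theorem lsc_flat {s s' t t' : LTerm A} (h : DerivLsc s' t') (hs : s.flat = s'.flat)
    (ht : t.flat = t'.flat) : DerivLsc s t :=
  (flat_eq hs).trans (h.trans (flat_eq ht.symm))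

/-- is the program infinite -/
def pinf : PGA A → Bool
  | .prim _ => false
  | .seq X Y => pinf X || pinf Y
  | .rep _ => true

def plist : PGA A → List (PrimInstr A)
  | .prim u => [u]
  | .seq X Y => plist X ++ plist Y
  | .rep X => plist X

def phi : PGA A → LTerm A
  | .prim u => .instr (.prim u)
  | .seq X Y => (phi X).seq (phi Y)
  | .rep X => (phi X).seq (.instr (.rep (plist X).length))

theorem plist_ne (X : PGA A) : plist X ≠ [] := by
  induction X with
  | prim u => simp [plist]
  | seq X Y ih _ => simp [plist, ih]
  | rep X ih => simpa [plist] using ih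

theorem plist_pos (X : PGA A) : 1 ≤ (plist X).length :=
  List.length_pos_iff.2 (plist_ne X)

theorem phi_fin (X : PGA A) (h : pinf X = false) :
    (phi X).flat = (plist X).map Instr.prim := by
  induction X with
  | prim u => rfl
  | seq X Y ihX ihY =>
    simp only [pinf, Bool.or_eq_false_iff] at h
    simp [phi, LTerm.flat, plist, ihX h.1, ihY h.2]
  | rep X ih => simp [pinf] at h

theorem phi_inf (X : PGA A) (h : pinf X = true) (t : LTerm A) :
    DerivLsc ((phi X).seq t) (phi X) := by
  induction X generalizing t with
  | prim u => simp [pinf] at h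
  | seq X Y ihX ihY =>
    simp only [pinf, Bool.or_eq_true] at h
    refine (DerivLsc.assoc _ _ _).trans ?_
    rcases h with h | h
    · exact (ihX h _).trans (ihX h _).symm
    · exact .seq_congr (.refl _) (ihY h _)
  | rep X ih =>
    exact (DerivLsc.assoc _ _ _).trans (.seq_congr (.refl _) (.ax3 _ (plist_pos X) _))

theorem pinf_catP (l : List (PrimInstr A)) (X : PGA A) : pinf (catP l X) = pinf X := by
  induction l with
  | nil => rfl
  | cons u l ih => simp [catP, pinf, ih]

theorem plist_catP (l : List (PrimInstr A)) (X : PGA A) :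
    plist (catP l X) = l ++ plist X := by
  induction l with
  | nil => rfl
  | cons u l ih => simp [catP, plist, ih]

theorem flat_phi_catP (l : List (PrimInstr A)) (X : PGA A) :
    (phi (catP l X)).flat = l.map Instr.prim ++ (phi X).flat := by
  induction l with
  | nil => rfl
  | cons u l ih => simp [catP, phi, LTerm.flat, ih]

theorem pinf_fromL (v : PrimInstr A) (l : List (PrimInstr A)) : pinf (fromL v l) = false := by
  induction l generalizing v with
  | nil => rfl
  | cons u l ih => simp [fromL, pinf, ih]

theorem plist_fromL (v : PrimInstr A) (l : List (PrimInstr A)) :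
    plist (fromL v l) = v :: l := by
  induction l generalizing v with
  | nil => rfl
  | cons u l ih => simp [fromL, plist, ih]

theorem plist_pow (X : PGA A) (n : ℕ) : plist (X.pow (n+1)) = listPow (plist X) (n+1) := by
  induction n with
  | zero => simp [PGA.pow, listPow]
  | succ n ih => rw [PGA.pow, plist, ih]; rfl

theorem pinf_pow (X : PGA A) (n : ℕ) : pinf (X.pow (n+1)) = pinf X := by
  induction n with
  | zero => rfl
  | succ n ih => simp [PGA.pow, pinf, ih]

theorem phi_pow_inf (X : PGA A) (h : pinf X = true) (n : ℕ) :
    DerivLsc (phi (X.pow (n+1))) (phi X) := by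
  cases n with
  | zero => exact .refl _
  | succ n => exact phi_inf X h _

theorem length_listPow {α : Type} (l : List α) (m : ℕ) :
    (listPow l m).length = m * l.length := by
  induction m with
  | zero => simp [listPow]
  | succ n ih => simp [listPow, ih]; ring

theorem flat_phi_rep (X : PGA A) (h : pinf X = false) :
    (phi X.rep).flat = (plist X).map Instr.prim ++ [.rep (plist X).length] := by
  simp [phi, LTerm.flat, phi_fin X h]

theorem forward {X Y : PGA A} (h : DerivSC X Y) :
    pinf X = pinf Y ∧ (pinf X = false → (plist X).length = (plist Y).length) ∧
      DerivLsc (phi X) (phi Y) := by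
  induction h with
  | refl X => exact ⟨rfl, fun _ => rfl, .refl _⟩
  | symm _ ih => exact ⟨ih.1.symm, fun h => (ih.2.1 (ih.1.trans h)).symm, ih.2.2.symm⟩
  | trans _ _ ih1 ih2 =>
    exact ⟨ih1.1.trans ih2.1, fun h => (ih1.2.1 h).trans (ih2.2.1 (ih1.1 ▸ h)),
      ih1.2.2.trans ih2.2.2⟩
  | seq_congr _ _ ih1 ih2 =>
    refine ⟨by simp [pinf, ih1.1, ih2.1], fun h => ?_, .seq_congr ih1.2.2 ih2.2.2⟩
    simp only [pinf, Bool.or_eq_false_iff] at h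
    simp [plist, ih1.2.1 h.1, ih2.2.1 h.2]
  | @rep_congr X Y _ ih =>
    refine ⟨rfl, fun h => by simp [pinf] at h, ?_⟩
    cases hX : pinf X with
    | true => exact (phi_inf X hX _).trans (ih.2.2.trans (phi_inf Y (ih.1 ▸ hX) _).symm)
    | false =>
      rw [phi, phi, ih.2.1 hX]
      exact .seq_congr ih.2.2 (.refl _)
  | pga1 X Y Z =>
    exact ⟨by simp [pinf, Bool.or_assoc], fun _ => by simp [plist, add_assoc], .assoc _ _ _⟩
  | pga2 X n hn =>
    refine ⟨rfl, fun h => by simp [pinf] at h, ?_⟩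
    obtain ⟨n, rfl⟩ : ∃ k, n = k + 1 := ⟨n - 1, by omega⟩
    cases hX : pinf X with
    | true =>
      exact (phi_inf _ ((pinf_pow X n).trans hX) _).trans
        ((phi_pow_inf X hX n).trans (phi_inf X hX _).symm)
    | false =>
      obtain ⟨u, us, hu⟩ := List.exists_cons_of_ne_nil (plist_ne X)
      refine lsc_flat (DerivLsc.ax2 u us (n+1) (by omega)).symm ?_ ?_
      · rw [flat_phi_rep _ ((pinf_pow X n).trans hX), flat_pcat, plist_pow, hu, length_listPow]
        rfl
      · rw [flat_phi_rep _ hX, flat_pcat, hu]; rfl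
  | pga3 X Y =>
    refine ⟨rfl, fun h => by simp [pinf] at h, phi_inf X.rep rfl _⟩
  | pga4 X Y =>
    refine ⟨by simp [pinf], fun h => by simp [pinf] at h, ?_⟩
    cases hX : pinf X with
    | true =>
      exact (phi_inf (X.seq Y) (by simp [pinf, hX]) _).trans
        ((phi_inf X hX _).trans (phi_inf X hX _).symm)
    | false =>
      cases hY : pinf Y with
      | true =>
        refine (phi_inf (X.seq Y) (by simp [pinf, hY]) _).trans ?_
        refine .seq_congr (.refl _) ?_
        exact ((phi_inf (Y.seq X) (by simp [pinf, hY]) _).trans (phi_inf Y hY _)).symm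
      | false =>
        obtain ⟨u, us, hu⟩ := List.exists_cons_of_ne_nil (plist_ne X)
        obtain ⟨v, vs, hv⟩ := List.exists_cons_of_ne_nil (plist_ne Y)
        refine lsc_flat (DerivLsc.ax4 u us v vs) ?_ ?_
        · rw [flat_phi_rep _ (by simp [pinf, hX, hY]), flat_pcat]
          simp [plist, hu, hv, LTerm.flat]
          omega
        · rw [phi, LTerm.flat, flat_phi_rep _ (by simp [pinf, hX, hY]), flat_pcat, phi_fin X hX]
          simp [plist, hu, hv, LTerm.flat]
          omega
  | pga5 l =>
    refine ⟨by simp [pinf_catP], fun _ => by simp [plist_catP], ?_⟩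
    refine lsc_flat (DerivLsc.ax5 l) ?_ ?_ <;> simp [flat_phi_catP, flat_pcat, phi]
  | pga6 l m =>
    refine ⟨by simp [pinf_catP], fun _ => by simp [plist_catP], ?_⟩
    rcases Nat.eq_zero_or_pos m with rfl | hm
    · exact .refl _
    · refine lsc_flat (DerivLsc.ax6 l m hm) ?_ ?_ <;> simp [flat_phi_catP, flat_pcat, phi]
  | pga7 k l =>
    refine ⟨rfl, fun h => by simp [pinf] at h, ?_⟩
    refine lsc_flat (DerivLsc.ax7 l k) ?_ ?_ <;>
      rw [flat_phi_rep _ (pinf_fromL _ _), flat_pcat, plist_fromL] <;> simp [LTerm.flat]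
    omega
  | pga8 l₁ v l₂ k =>
    refine ⟨by simp [pinf], fun h => by simp [pinf, progYZw, pinf_catP] at h, ?_⟩
    refine lsc_flat (DerivLsc.ax8 l₁ v l₂ k) ?_ ?_ <;>
      rw [phi, LTerm.flat, progYZw, flat_phi_catP, flat_phi_rep _ (pinf_fromL _ _), flat_pcat,
        plist_fromL] <;> simp [LTerm.flat, phi] <;> omega

theorem P_info (l : List (PrimInstr A)) (h : l ≠ []) :
    pinf (pgaOfPrims l) = false ∧ plist (pgaOfPrims l) = l := by
  induction l with
  | nil => exact absurd rfl h
  | cons u l ih =>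
    cases l with
    | nil => exact ⟨rfl, rfl⟩
    | cons v l =>
      have := ih (by simp)
      simp [pgaOfPrims, pinf, plist, this]

theorem primsOf_map (l : List (PrimInstr A)) : primsOf (l.map Instr.prim) = l := by
  induction l with
  | nil => rfl
  | cons u l ih => simpa [primsOf] using ih

theorem primsOf_map_rep (l : List (PrimInstr A)) (n : ℕ) :
    primsOf (l.map Instr.prim ++ [.rep n]) = l := by
  have := primsOf_map l
  unfold primsOf at *
  rw [List.filterMap_append, this]; simp

theorem repOf_map (l : List (PrimInstr A)) : repOf (l.map Instr.prim) = none := by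
  unfold repOf
  rw [List.getLast?_map]
  cases l.getLast? <;> rfl

theorem repOf_map_rep (l : List (PrimInstr A)) (n : ℕ) :
    repOf (l.map Instr.prim ++ [.rep n]) = some n := by
  simp [repOf]

theorem phi_K (P : LTerm A) (h : IsKProg P) : DerivLsc (phi (pgaOfK P.flat)) P := by
  apply flat_eq
  rcases h with ⟨u, us, h⟩ | ⟨u, us, n, h, h1, h2⟩
  · have hi := P_info (u :: us) (by simp)
    rw [h, pgaOfK, repOf_map, primsOf_map]
    show (phi (pgaOfPrims (u :: us))).flat = _
    rw [phi_fin _ hi.1, hi.2]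
  · rw [h, pgaOfK, repOf_map_rep, primsOf_map_rep]
    generalize hl : u :: us = l at *
    have hne : l ≠ [] := by simp [← hl]
    dsimp only
    split_ifs with hc
    · have hi := P_info l hne
      rw [flat_phi_rep _ hi.1, hi.2]
      congr 3; omega
    · have h1' := P_info (l.take (l.length - n)) (by simp [hne]; omega)
      have h2' := P_info (l.drop (l.length - n)) (by simp; omega)
      rw [phi, LTerm.flat, flat_phi_rep _ h2'.1, phi_fin _ h1'.1, h1'.2, h2'.2,
        ← List.append_assoc, ← List.map_append, List.take_append_drop]
      congr 3; simp; omega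

end Forward

section Backward
variable {A : Type}

theorem catP_app (a b : List (PrimInstr A)) (X : PGA A) :
    catP (a ++ b) X = catP a (catP b X) := by
  induction a with
  | nil => rfl
  | cons u a ih => simp [catP, ih]

theorem catP_congr (a : List (PrimInstr A)) {X Y : PGA A} (h : DerivSC X Y) :
    DerivSC (catP a X) (catP a Y) := by
  induction a with
  | nil => exact h
  | cons u a ih => exact .seq_congr (.refl _) ih

theorem P_cons (u : PrimInstr A) (l : List (PrimInstr A)) (h : l ≠ []) :
    pgaOfPrims (u :: l) = (PGA.prim u).seq (pgaOfPrims l) := by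
  cases l with
  | nil => exact absurd rfl h
  | cons v l => rfl

theorem P_app (a b : List (PrimInstr A)) (h : b ≠ []) :
    pgaOfPrims (a ++ b) = catP a (pgaOfPrims b) := by
  induction a with
  | nil => rfl
  | cons u a ih => rw [List.cons_append, P_cons _ _ (by simp [h]), ih]; rfl

theorem fromL_eq (v : PrimInstr A) (l : List (PrimInstr A)) : fromL v l = pgaOfPrims (v :: l) := by
  induction l generalizing v with
  | nil => rfl
  | cons u l ih => simp [fromL, pgaOfPrims, ih]

theorem catP_seq (l : List (PrimInstr A)) (h : l ≠ []) (X : PGA A) :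
    DerivSC (catP l X) ((pgaOfPrims l).seq X) := by
  induction l with
  | nil => exact absurd rfl h
  | cons u l ih =>
    by_cases hl : l = []
    · subst hl; exact .refl _
    · rw [P_cons u l hl]
      exact (DerivSC.seq_congr (.refl _) (ih hl)).trans (DerivSC.pga1 _ _ _).symm

theorem rep_unfold (Y : PGA A) : DerivSC Y.rep (Y.seq Y.rep) := by
  have h := DerivSC.pga2 Y 2 (by omega)
  exact h.symm.trans ((DerivSC.pga4 Y Y).trans (.seq_congr (.refl _) h))

theorem P_pow (l : List (PrimInstr A)) (h : l ≠ []) (n : ℕ) :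
    DerivSC (pgaOfPrims (listPow l (n+1))) ((pgaOfPrims l).pow (n+1)) := by
  induction n with
  | zero => simp only [listPow, List.append_nil, PGA.pow, zero_add]; exact .refl _
  | succ n ih =>
    rw [listPow, P_app _ _ (by simp [listPow, h])]
    exact (catP_seq l h _).trans (.seq_congr (.refl _) ih)

def WW (L : List (PrimInstr A)) (n : ℕ) : PGA A :=
  catP (L.take (L.length - n)) (PGA.rep (pgaOfPrims (L.drop (L.length - n))))

theorem WW_app (a l : List (PrimInstr A)) (n : ℕ) (h : n = l.length) :
    WW (a ++ l) n = catP a (PGA.rep (pgaOfPrims l)) := by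
  subst h; simp [WW]

theorem WW_full (L : List (PrimInstr A)) (n : ℕ) (h1 : 1 ≤ n) (h2 : n ≤ L.length) :
    DerivSC (WW L n) (catP L (PGA.rep (pgaOfPrims (L.drop (L.length - n))))) := by
  conv => rhs; arg 1; rw [← List.take_append_drop (L.length - n) L]
  rw [catP_app]
  exact catP_congr _ ((rep_unfold _).trans (catP_seq _ (by simp; omega) _).symm)

theorem P_ctx (a l l' b : List (PrimInstr A)) (hl : l ≠ []) (hl' : l' ≠ [])
    (h : DerivSC (pgaOfPrims l) (pgaOfPrims l')) :
    DerivSC (pgaOfPrims (a ++ (l ++ b))) (pgaOfPrims (a ++ (l' ++ b))) := by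
  rw [P_app a (l ++ b) (by simp [hl]), P_app a (l' ++ b) (by simp [hl'])]
  apply catP_congr
  by_cases hb : b = []
  · simpa [hb] using h
  · rw [P_app _ _ hb, P_app _ _ hb]
    exact (catP_seq l hl _).trans ((DerivSC.seq_congr h (.refl _)).trans (catP_seq l' hl' _).symm)

theorem WW_ctx (a l b : List (PrimInstr A)) (x x' : PrimInstr A)
    (h : DerivSC (pgaOfPrims (x :: l)) (pgaOfPrims (x' :: l))) (n : ℕ) (h1 : 1 ≤ n)
    (h2 : n ≤ (a ++ ((x :: l) ++ b)).length) :
    DerivSC (WW (a ++ ((x :: l) ++ b)) n) (WW (a ++ ((x' :: l) ++ b)) n) := by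
  have hlen : (a ++ ((x' :: l) ++ b)).length = (a ++ ((x :: l) ++ b)).length := by simp
  refine (WW_full _ n h1 h2).trans (DerivSC.trans ?_ (WW_full _ n h1 (hlen ▸ h2)).symm)
  rw [hlen]
  generalize (a ++ ((x :: l) ++ b)).length - n = c
  have hP := P_ctx a (x :: l) (x' :: l) b (by simp) (by simp) h
  refine (catP_seq _ (by simp) _).trans
    (DerivSC.trans (.seq_congr hP (.rep_congr ?_)) (catP_seq _ (by simp) _).symm)
  by_cases hc : c ≤ a.length
  · rw [List.drop_append_of_le_length hc, List.drop_append_of_le_length hc]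
    exact P_ctx _ (x :: l) (x' :: l) b (by simp) (by simp) h
  · obtain ⟨d, rfl⟩ : ∃ d, c = a.length + (d + 1) := ⟨c - a.length - 1, by omega⟩
    have e : ∀ y : PrimInstr A, List.drop (a.length + (d + 1)) (a ++ ((y :: l) ++ b))
        = List.drop d (l ++ b) := fun y => by
      rw [List.drop_append, List.drop_eq_nil_of_le (by omega)]; simp
    rw [e, e]
    exact .refl _

def Tr : List (PrimInstr A) → List (Instr A) → Option (PGA A)
  | acc, [] => some (pgaOfPrims acc)
  | acc, .prim u :: l => Tr (acc ++ [u]) l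
  | acc, .rep n :: _ => if 1 ≤ n ∧ n ≤ acc.length then some (WW acc n) else none

def OR : Option (PGA A) → Option (PGA A) → Prop
  | none, none => True
  | some X, some Y => DerivSC X Y
  | _, _ => False

theorem OR.refl (x : Option (PGA A)) : OR x x := by
  cases x with
  | none => trivial
  | some X => exact DerivSC.refl X

theorem OR.symm {x y : Option (PGA A)} (h : OR x y) : OR y x := by
  cases x <;> cases y <;> first | exact h | exact DerivSC.symm h

theorem OR.trans {x y z : Option (PGA A)} (h : OR x y) (h' : OR y z) : OR x z := by
  cases x <;> cases y <;> cases z <;>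
    first | exact h | exact h' | exact h.elim | exact h'.elim | exact DerivSC.trans h h'

theorem Tr_map (us : List (PrimInstr A)) (acc : List (PrimInstr A)) (q : List (Instr A)) :
    Tr acc (us.map Instr.prim ++ q) = Tr (acc ++ us) q := by
  induction us generalizing acc with
  | nil => simp
  | cons u us ih => simp [Tr, ih]

theorem Tr_left (l x y : List (Instr A)) (h : ∀ acc, OR (Tr acc x) (Tr acc y)) (acc) :
    OR (Tr acc (l ++ x)) (Tr acc (l ++ y)) := by
  induction l generalizing acc with
  | nil => exact h acc
  | cons i l ih =>
    cases i with
    | prim u => exact ih _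
    | rep n => exact OR.refl _

theorem Tr_ctx (a l b : List (PrimInstr A)) (x x' : PrimInstr A)
    (h : DerivSC (pgaOfPrims (x :: l)) (pgaOfPrims (x' :: l))) (q : List (Instr A)) :
    OR (Tr (a ++ ((x :: l) ++ b)) q) (Tr (a ++ ((x' :: l) ++ b)) q) := by
  induction q generalizing b with
  | nil => exact P_ctx a (x :: l) (x' :: l) b (by simp) (by simp) h
  | cons i q ih =>
    cases i with
    | prim u => simpa [Tr] using ih (b ++ [u])
    | rep n =>
      have hlen : (a ++ ((x' :: l) ++ b)).length = (a ++ ((x :: l) ++ b)).length := by simp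
      unfold Tr
      rw [hlen]
      split_ifs with hc
      · exact WW_ctx a l b x x' h n hc.1 hc.2
      · trivial

theorem Tr_rep (acc pre l : List (PrimInstr A)) (n : ℕ) (q : List (Instr A))
    (hn : n = l.length) (hl : l ≠ []) :
    Tr acc (((pre ++ l).map Instr.prim ++ [.rep n]) ++ q)
      = some (catP acc (catP pre (PGA.rep (pgaOfPrims l)))) := by
  rw [List.append_assoc, Tr_map, ← List.append_assoc]
  have : 1 ≤ n := hn ▸ List.length_pos_iff.2 hl
  simp only [List.singleton_append, Tr]
  rw [if_pos ⟨this, by simp; omega⟩, WW_app _ _ _ hn, catP_app]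

theorem Tr_last (acc l : List (PrimInstr A)) (x x' z : PrimInstr A) (q : List (Instr A))
    (h : DerivSC (catP (x :: l) (.prim z)) (catP (x' :: l) (.prim z))) :
    OR (Tr acc ((pcat (x :: l) (.instr (.prim z))).flat ++ q))
      (Tr acc ((pcat (x' :: l) (.instr (.prim z))).flat ++ q)) := by
  have e : ∀ y, (pcat (y :: l) (.instr (.prim z))).flat ++ q
      = (y :: (l ++ [z])).map Instr.prim ++ q := fun y => by simp [flat_pcat, LTerm.flat]
  rw [e, e, Tr_map, Tr_map]
  have := Tr_ctx acc (l ++ [z]) [] x x' (by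
    rw [← List.cons_append, ← List.cons_append, P_app _ _ (by simp), P_app _ _ (by simp)]
    exact h) q
  simpa using this

theorem backward {s t : LTerm A} (h : DerivLsc s t) :
    ∀ acc q, OR (Tr acc (s.flat ++ q)) (Tr acc (t.flat ++ q)) := by
  induction h with
  | refl => exact fun _ _ => OR.refl _
  | symm _ ih => exact fun a q => (ih a q).symm
  | trans _ _ ih1 ih2 => exact fun a q => (ih1 a q).trans (ih2 a q)
  | seq_congr _ _ ih1 ih2 =>
    intro a q
    simp only [LTerm.flat, List.append_assoc]
    exact (ih1 a _).trans (Tr_left _ _ _ (fun acc => ih2 acc q) a)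
  | assoc => intro a q; simp only [LTerm.flat, List.append_assoc]; exact OR.refl _
  | ax2 u us m hm =>
    intro a q
    obtain ⟨m, rfl⟩ : ∃ k, m = k + 1 := ⟨m - 1, by omega⟩
    rw [flat_pcat, flat_pcat]
    have e1 := Tr_rep a [] (u :: us) (u :: us).length q rfl (by simp)
    have e2 := Tr_rep a [] (listPow (u :: us) (m+1)) ((m+1) * (u :: us).length) q
      (length_listPow _ _).symm (by simp [listPow])
    simp only [List.nil_append] at e1 e2
    simp only [LTerm.flat]
    rw [e1, e2]
    refine catP_congr a (catP_congr [] ?_)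
    exact ((DerivSC.rep_congr (P_pow _ (by simp) m)).trans (.pga2 _ _ hm)).symm
  | ax3 n hn t => intro a q; exact OR.refl _
  | ax4 u us v vs =>
    intro a q
    rw [flat_pcat, flat_pcat]
    have e1 := Tr_rep a [] ((u :: us) ++ (v :: vs)) ((u :: us).length + (v :: vs).length) q
      (by simp; omega) (by simp)
    have e2 := Tr_rep a (u :: us) ((v :: vs) ++ (u :: us))
      ((u :: us).length + (v :: vs).length) q (by simp; omega) (by simp)
    rw [List.nil_append] at e1
    rw [← List.append_assoc (u :: us)] at e2
    simp only [LTerm.flat]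
    rw [e1, e2]
    refine catP_congr a ?_
    rw [P_app _ _ (by simp), P_app _ _ (by simp)]
    refine (DerivSC.rep_congr (catP_seq _ (by simp) _)).trans ((DerivSC.pga4 _ _).trans ?_)
    exact (DerivSC.seq_congr (.refl _) (.rep_congr (catP_seq _ (by simp) _).symm)).trans
      (catP_seq _ (by simp) _).symm
  | ax5 us => exact fun a q => Tr_last a us _ _ _ q (.pga5 us)
  | ax6 us m hm => exact fun a q => Tr_last a us _ _ _ q (.pga6 us m)
  | ax7 us l =>
    intro a q
    rw [flat_pcat, flat_pcat]
    have e := fun j : ℕ => Tr_rep a [] (.jump j :: us) (us.length + 1) q (by simp) (by simp)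
    simp only [List.nil_append] at e
    simp only [LTerm.flat]
    rw [e, e]
    refine catP_congr a ?_
    have := DerivSC.pga7 l us
    rw [fromL_eq, fromL_eq, show l + us.length + 1 = us.length + 1 + l by omega] at this
    exact this
  | ax8 us v vs l =>
    intro a q
    rw [flat_pcat, flat_pcat]
    have e := fun j : ℕ => Tr_rep a (.jump j :: us) (v :: vs) (vs.length + 1) q (by simp) (by simp)
    simp only [List.cons_append] at e
    simp only [LTerm.flat, List.cons_append]
    rw [e, e]
    refine catP_congr a ?_
    have := DerivSC.pga8 us v vs l
    rw [progYZw, fromL_eq, show us.length + vs.length + l + 2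
      = us.length + 1 + (vs.length + 1) + l by omega,
      show us.length + l + 1 = us.length + 1 + l by omega] at this
    exact this

theorem Tr_K (P : LTerm A) (h : IsKProg P) : OR (Tr [] P.flat) (some (pgaOfK P.flat)) := by
  rcases h with ⟨u, us, h⟩ | ⟨u, us, n, h, h1, h2⟩
  · rw [h, pgaOfK, repOf_map, primsOf_map]
    have := Tr_map (u :: us) [] []
    rw [List.append_nil] at this
    rw [this]
    exact DerivSC.refl _
  · rw [h, pgaOfK, repOf_map_rep, primsOf_map_rep]
    generalize hl : u :: us = l at *
    have hne : l ≠ [] := by simp [← hl]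
    rw [Tr_map, List.nil_append]
    unfold Tr
    rw [if_pos ⟨h1, h2⟩]
    dsimp only
    split_ifs with hc
    · have : l.length - n = 0 := by omega
      rw [WW, this]
      exact DerivSC.refl _
    · exact catP_seq _ (by simp [hne]; omega) _

end Backward

/-- Two `K`-programs are structurally congruent (their PGA-translations are
provably equal from PGA1-PGA8) if and only if their equality is derivable in
the proof system `L_sc`. -/
theorem K_structural_congruence_iff_Lsc (A : Type) (P Q : LTerm A)
    (hP : IsKProg P) (hQ : IsKProg Q) :
    DerivSC (pgaOfK P.flat) (pgaOfK Q.flat) ↔ DerivLsc P Q := by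
  constructor
  · intro h
    exact (phi_K P hP).symm.trans ((forward h).2.2.trans (phi_K Q hQ))
  · intro h
    have := backward h [] []
    rw [List.append_nil, List.append_nil] at this
    exact ((Tr_K P hP).symm.trans this).trans (Tr_K Q hQ)
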